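/- arXiv:2503.19561 — 8 statements merged into one kernel-verified Lean document; each statement's English description precedes it below -/
import Mathlib

section
/- For any graph G_np = (V_np, E_np) over a finite alphabet Σ that is not path-complete, there exist a dimension n, a discrete-time switched system S_np over Σ on ℝ^n with linear modes, and sets X0, Xu ⊆ ℝ^n such that: (1) S_np violates Safe(X0, Xu), i.e., some trajectory starting in X0 enters Xu; and (2) there exists an admissible graph-based barrier function (G_np, {B_v : v ∈ V_np}) for S_np, X0, Xu, i.e., functions B_v : ℝ^n → ℝ satisfying B_v(x) ≤ 0 for all x ∈ X0 and v ∈ V_np, B_v(x) > 0 for all x ∈ Xu and v ∈ V_np, and B_{v'}(A_σ x) ≤ B_v(x) for all x ∈ ℝ^n and all (v, σ, v') ∈ E_np. -/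
/-!
Take a word `w` of length `k` that the graph does not accept. On the span of `e₀, …, e_k`, let the
mode `a` send `e_j` to `e_{j+1}` if the `j`-th letter of `w` is `a`, and to `0` otherwise. Reading
`w` drives `e₀` to `e_k`. Attach to a vertex `v` the set of states consisting of `0` and of those
`e_i` for which the first `i` letters of `w` label a path ending at `v`. These sets contain `e₀`,
are mapped into one another along the edges, and avoid `e_k` because `w` is rejected, so the
indicator functions of their complements form a barrier.
-/

open Matrix

/-- Trajectory of a time-varying discrete-time dynamical system. -/
def traj {S : Type*} (f : ℕ → S → S) (x0 : S) : ℕ → S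
  | 0 => x0
  | t + 1 => f t (traj f x0 t)

lemma indicator_compl_le_of_mapsTo {α β M : Type*} [Zero M] [One M] [Preorder M]
    [ZeroLEOneClass M] {f : α → β} {S : Set α} {T : Set β} (hf : Set.MapsTo f S T) (x : α) :
    Tᶜ.indicator (1 : β → M) (f x) ≤ Sᶜ.indicator 1 x := by
  by_cases hx : x ∈ S
  · simp [hx, hf hx]
  · exact (Set.indicator_le_self' (fun _ _ ↦ zero_le_one) (f x)).trans_eq (by simp [hx])

section Graph

variable {V A : Type*} {k : ℕ}

/-- Acceptance of a finite word by a labelled graph: the letters of `w` label a path of `E`. -/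
def GraphAccepts (E : Set (V × A × V)) (w : Fin k → A) : Prop :=
  ∃ p : Fin (k + 1) → V, ∀ j : Fin k, (p j.castSucc, w j, p j.succ) ∈ E

/-- Acceptance of a prefix with prescribed final vertex: the first `i` letters of `w` label a path
of `E` ending at `v`. The path is encoded as a full vertex sequence `p` whose entries after the
`i`-th are arbitrary. -/
def PrefixPathTo (E : Set (V × A × V)) (w : Fin k → A) (i : Fin (k + 1)) (v : V) : Prop :=
  ∃ p : Fin (k + 1) → V, p i = v ∧
    ∀ j : Fin k, j.castSucc < i → (p j.castSucc, w j, p j.succ) ∈ E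

variable {E : Set (V × A × V)} {w : Fin k → A}

lemma prefixPathTo_zero (v : V) : PrefixPathTo E w 0 v :=
  ⟨fun _ ↦ v, rfl, fun _ hj ↦ absurd hj (Fin.not_lt_zero _)⟩

lemma PrefixPathTo.succ {j : Fin k} {v v' : V} (h : PrefixPathTo E w j.castSucc v)
    (he : (v, w j, v') ∈ E) : PrefixPathTo E w j.succ v' := by
  obtain ⟨p, rfl, hp⟩ := h
  refine ⟨Function.update p j.succ v', Function.update_self .., fun l hl ↦ ?_⟩
  rw [Function.update_of_ne hl.ne]
  obtain rfl | hlj := (Fin.castSucc_lt_succ_iff.mp hl).eq_or_lt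
  · rwa [Function.update_self]
  · rw [Function.update_of_ne (Fin.succ_injective _ |>.ne hlj.ne)]
    exact hp l hlj

lemma PrefixPathTo.graphAccepts {v : V} (h : PrefixPathTo E w (Fin.last k) v) :
    GraphAccepts E w :=
  let ⟨p, _, hp⟩ := h
  ⟨p, fun j ↦ hp j j.castSucc_lt_last⟩

end Graph

section WordShift

variable {V A R : Type*} [Semiring R] {k : ℕ}

variable (R) in
/-- The mode `a` of the switched system that follows the word `w`: it sends the basis vector
`e_j` to `e_{j+1}` if `w j = a` and to `0` otherwise, and kills `e_k`. It is given by its columns,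
the images of the basis vectors. -/
def wordShift [DecidableEq A] (w : Fin k → A) (a : A) :
    Matrix (Fin (k + 1)) (Fin (k + 1)) R :=
  (Matrix.of (Fin.snoc (fun j ↦ if w j = a then Pi.single j.succ 1 else 0) 0))ᵀ

lemma wordShift_mulVec_single_castSucc [DecidableEq A] (w : Fin k → A) (a : A) (j : Fin k) :
    wordShift R w a *ᵥ Pi.single j.castSucc 1 = if w j = a then Pi.single j.succ 1 else 0 := by
  ext r
  simp [wordShift]

lemma wordShift_mulVec_single_last [DecidableEq A] (w : Fin k → A) (a : A) :
    wordShift R w a *ᵥ Pi.single (Fin.last k) 1 = 0 := by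
  ext r
  simp [wordShift]

lemma traj_wordShift [DecidableEq A] {w : Fin k → A} {σ : ℕ → A} (hσ : ∀ j : Fin k, σ j = w j)
    (i : Fin (k + 1)) :
    traj (fun t x ↦ wordShift R w (σ t) *ᵥ x) (Pi.single 0 1) i = Pi.single i 1 := by
  induction i using Fin.induction with
  | zero => rfl
  | succ j ih =>
    rw [Fin.val_castSucc] at ih
    rw [Fin.val_succ, traj, ih, wordShift_mulVec_single_castSucc, if_pos (hσ j).symm]

variable (R) in
/-- The states that the word-following system `wordShift` can have at the vertex `v`: the origin,
which it reaches on leaving the word, and the basis vectors `e_i` such that the first `i` letters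
of `w` label a path ending at `v`. The barrier at `v` vanishes exactly on this set. -/
def prefixStates (E : Set (V × A × V)) (w : Fin k → A) (v : V) : Set (Fin (k + 1) → R) :=
  {x | x = 0 ∨ ∃ i, PrefixPathTo E w i v ∧ x = Pi.single i 1}

variable {E : Set (V × A × V)} {w : Fin k → A}

lemma single_zero_mem_prefixStates (v : V) : Pi.single 0 1 ∈ prefixStates R E w v :=
  .inr ⟨0, prefixPathTo_zero v, rfl⟩

lemma single_last_notMem_prefixStates [Nontrivial R] (hw : ¬ GraphAccepts E w) (v : V) :
    Pi.single (Fin.last k) 1 ∉ prefixStates R E w v := by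
  rintro (h | ⟨i, hi, h⟩)
  · exact one_ne_zero (Pi.single_eq_zero_iff.mp h)
  · obtain rfl : Fin.last k = i := by
      by_contra hne
      simpa [hne] using congrFun h (Fin.last k)
    exact hw hi.graphAccepts

lemma mapsTo_wordShift_prefixStates [DecidableEq A] {v v' : V} {a : A} (he : (v, a, v') ∈ E) :
    Set.MapsTo (wordShift R w a *ᵥ ·) (prefixStates R E w v) (prefixStates R E w v') := by
  rintro x (rfl | ⟨i, hi, rfl⟩)
  · exact .inl (Matrix.mulVec_zero _)
  cases i using Fin.lastCases with
  | last => exact .inl (wordShift_mulVec_single_last w a)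
  | cast j =>
    beta_reduce
    rw [wordShift_mulVec_single_castSucc]
    split_ifs with hja
    · subst hja
      exact .inr ⟨j.succ, hi.succ he, rfl⟩
    · exact .inl rfl

end WordShift

theorem nonpathcomplete_counterexample_general {V A : Type*} (R : Type*) [Semiring R]
    [Nontrivial R] (E : Set (V × A × V))
    (hnpc : ¬ ∀ k : ℕ, 1 ≤ k → ∀ w : Fin k → A,
      ∃ v : Fin (k + 1) → V, ∀ i : Fin k, (v i.castSucc, w i, v i.succ) ∈ E) :
    ∃ (n : ℕ) (M : A → Matrix (Fin n) (Fin n) R)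
      (X0 Xu : Set (Fin n → R)) (B : V → (Fin n → R) → ℝ),
      (∃ x0 ∈ X0, ∃ σ : ℕ → A, ∃ t : ℕ,
        traj (fun s x => M (σ s) *ᵥ x) x0 t ∈ Xu) ∧
      (∀ v : V, ∀ x ∈ X0, B v x ≤ 0) ∧
      (∀ v : V, ∀ x ∈ Xu, 0 < B v x) ∧
      (∀ e ∈ E, ∀ x : Fin n → R, B e.2.2 (M e.2.1 *ᵥ x) ≤ B e.1 x) := by
  classical
  obtain ⟨k, hk, w, hw⟩ : ∃ k, ∃ _ : 1 ≤ k, ∃ w : Fin k → A, ¬ GraphAccepts E w := by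
    simpa only [GraphAccepts, not_forall] using hnpc
  let σ : ℕ → A := Function.extend Fin.val w fun _ ↦ w ⟨0, hk⟩
  have hσ (j : Fin k) : σ j = w j := Fin.val_injective.extend_apply ..
  refine ⟨k + 1, wordShift R w, {Pi.single 0 1}, {Pi.single (Fin.last k) 1},
    fun v ↦ (prefixStates R E w v)ᶜ.indicator 1,
    ⟨_, rfl, σ, k, traj_wordShift hσ (Fin.last k)⟩, ?_, ?_, ?_⟩
  · rintro v _ rfl
    exact (Set.indicator_of_notMem (Set.notMem_compl_iff.mpr (single_zero_mem_prefixStates v)) _).le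
  · rintro v _ rfl
    simp [single_last_notMem_prefixStates hw v]
  · rintro ⟨v, a, v'⟩ he x
    exact indicator_compl_le_of_mapsTo (mapsTo_wordShift_prefixStates he) x

/-- Necessity of path-completeness: for any graph `(V, E)` over a
finite alphabet that is not path-complete, there exist a dimension `n`, a
switched linear system `x(t+1) = A_{σ(t)} x(t)` on `ℝⁿ`, and sets `X0, Xu ⊆ ℝⁿ`
such that (1) the system violates `Safe(X0, Xu)` (some trajectory starting in
`X0` enters `Xu`); and (2) there is an admissible graph-based barrier function
`(G, {B_v})` for the system, `X0` and `Xu`. -/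
theorem nonpathcomplete_counterexample {V A : Type} [Fintype V] [Fintype A]
    (E : Set (V × A × V))
    (hnpc : ¬ ∀ k : ℕ, 1 ≤ k → ∀ w : Fin k → A,
      ∃ v : Fin (k + 1) → V, ∀ i : Fin k, (v i.castSucc, w i, v i.succ) ∈ E) :
    ∃ (n : ℕ) (M : A → Matrix (Fin n) (Fin n) ℝ)
      (X0 Xu : Set (Fin n → ℝ)) (B : V → (Fin n → ℝ) → ℝ),
      (∃ x0 ∈ X0, ∃ σ : ℕ → A, ∃ t : ℕ,
        traj (fun s x => M (σ s) *ᵥ x) x0 t ∈ Xu) ∧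
      (∀ v : V, ∀ x ∈ X0, B v x ≤ 0) ∧
      (∀ v : V, ∀ x ∈ Xu, 0 < B v x) ∧
      (∀ e ∈ E, ∀ x : Fin n → ℝ, B e.2.2 (M e.2.1 *ᵥ x) ≤ B e.1 x) :=
  nonpathcomplete_counterexample_general ℝ E hnpc
end

section
/- Let σ_k = (σ0,…,σ_{k−1}) ∈ Σ^k with k ≥ 1, set n = k+1, and let A_σ = 2Â_σ be the constructed matrices. Then for the initial condition x0 = (1/2^k) e_1 (where e_1 is the first canonical basis vector, so that Σ_i x0[i]² = 1/4^k ≤ 1/4^k, i.e., x0 ∈ X0) and any switching sequence σ : ℕ → Σ whose first k letters are σ0,…,σ_{k−1}, the trajectory satisfies x(k) = A_{σ_{k−1}} ⋯ A_{σ_0} x0 = e_{k+1}, the last canonical basis vector; in particular Σ_i x(k)[i]² = 1 ≥ 1, so x(k) ∈ Xu and the system violates Safe(X0, Xu), where X0 = {x ∈ ℝ^n : Σ_{i=1}^n x[i]² ≤ 1/4^k} and Xu = {x ∈ ℝ^n : Σ_{i=1}^n x[i]² ≥ 1}. -/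
open Matrix

open scoped Classical in
/-- The binary matrix `Â_σ ∈ ℝ^{(k+1)×(k+1)}` built from the word `w ∈ Σ^k`
(0-indexed): `Â_σ[i,j] = 1` iff `w j = σ` and `i = j + 1`. -/
noncomputable def Ahat {k : ℕ} {A : Type} (w : Fin k → A) (σ : A) :
    Matrix (Fin (k + 1)) (Fin (k + 1)) ℝ :=
  Matrix.of fun i j =>
    if ∃ hj : (j : ℕ) < k, w ⟨(j : ℕ), hj⟩ = σ ∧ (i : ℕ) = (j : ℕ) + 1
    then (1 : ℝ) else 0

/-- `A_σ = 2 Â_σ`. -/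
noncomputable def Amat {k : ℕ} {A : Type} (w : Fin k → A) (σ : A) :
    Matrix (Fin (k + 1)) (Fin (k + 1)) ℝ :=
  (2 : ℝ) • Ahat w σ

/-! Applied to `e_j`, the matrix of the `j`-th letter of `w` gives `2 e_{j+1}`, so the `k` letters
of `w` carry `2⁻ᵏ e_1` to `e_{k+1}`. -/

theorem ite_val_eq_single {R : Type*} [Zero R] {n : ℕ} (j : Fin n) (c : R) :
    (fun i : Fin n => if (i : ℕ) = j then c else 0) = Pi.single j c := by
  ext i
  simp only [Pi.single_apply, Fin.ext_iff]

theorem sum_sq_single {ι R : Type*} [Fintype ι] [DecidableEq ι] [Semiring R] (j : ι) (c : R) :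
    ∑ i, (Pi.single j c : ι → R) i ^ 2 = c ^ 2 := by
  simp [Pi.single_apply, ite_pow]

section ConstructedSystem

variable {k : ℕ} {A : Type} (w : Fin k → A)

theorem Ahat_mulVec_single_castSucc (j : Fin k) (c : ℝ) :
    Ahat w (w j) *ᵥ Pi.single j.castSucc c = Pi.single j.succ c := by
  ext i
  simp [Ahat, Pi.single_apply, Fin.ext_iff]

theorem Amat_mulVec_single_castSucc (j : Fin k) (c : ℝ) :
    Amat w (w j) *ᵥ Pi.single j.castSucc c = Pi.single j.succ (2 * c) := by
  rw [Amat, smul_mulVec, Ahat_mulVec_single_castSucc, ← Pi.single_smul, smul_eq_mul]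

theorem traj_Amat_single_zero {σ : ℕ → A} (hσ : ∀ i : Fin k, σ i = w i) (c : ℝ)
    (j : Fin (k + 1)) :
    traj (fun s x => Amat w (σ s) *ᵥ x) (Pi.single 0 c) j = Pi.single j (2 ^ (j : ℕ) * c) := by
  induction j using Fin.induction with
  | zero => simp [traj]
  | succ j ih =>
    rw [Fin.val_castSucc] at ih
    rw [Fin.val_succ, traj, ih, hσ, Amat_mulVec_single_castSucc, pow_succ', mul_assoc]

end ConstructedSystem

/-- for the constructed system, the initial state
`x0 = (1/2^k) e_1` lies in `X0 = {x : ∑ x[i]² ≤ 1/4^k}`, and under any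
switching sequence whose first `k` letters are `w`, the trajectory satisfies
`x(k) = e_{k+1}`, hence `x(k) ∈ Xu = {x : ∑ x[i]² ≥ 1}` and the system
violates `Safe(X0, Xu)`. -/
theorem constructed_system_unsafe {k : ℕ} (hk : 1 ≤ k) {A : Type}
    (w : Fin k → A) (σ : ℕ → A) (hσ : ∀ i : Fin k, σ (i : ℕ) = w i)
    (x0 : Fin (k + 1) → ℝ)
    (hx0 : x0 = fun i : Fin (k + 1) => if (i : ℕ) = 0 then (1 : ℝ) / 2 ^ k else 0) :
    (∑ i, x0 i ^ 2 ≤ 1 / 4 ^ k) ∧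
    (traj (fun s x => Amat w (σ s) *ᵥ x) x0 k
      = fun i : Fin (k + 1) => if (i : ℕ) = k then (1 : ℝ) else 0) ∧
    (1 ≤ ∑ i, (traj (fun s x => Amat w (σ s) *ᵥ x) x0 k) i ^ 2) ∧
    ¬ (∀ y0 : Fin (k + 1) → ℝ, (∑ i, y0 i ^ 2 ≤ 1 / 4 ^ k) →
        ∀ τ : ℕ → A, ∀ t : ℕ,
          ¬ (1 ≤ ∑ i, (traj (fun s x => Amat w (τ s) *ᵥ x) y0 t) i ^ 2)) := by
  replace hx0 : x0 = Pi.single 0 (1 / 2 ^ k) := hx0.trans (ite_val_eq_single 0 _)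
  have start_mem : ∑ i, x0 i ^ 2 ≤ 1 / 4 ^ k := by
    rw [hx0, sum_sq_single, div_pow, one_pow, pow_right_comm]
    norm_num
  have traj_eq_last : traj (fun s x => Amat w (σ s) *ᵥ x) x0 k = Pi.single (Fin.last k) 1 := by
    have h := traj_Amat_single_zero w hσ (1 / 2 ^ k) (Fin.last k)
    rwa [← hx0, Fin.val_last, mul_one_div_cancel (by positivity)] at h
  have reaches_unsafe : 1 ≤ ∑ i, (traj (fun s x => Amat w (σ s) *ᵥ x) x0 k) i ^ 2 := by
    rw [traj_eq_last, sum_sq_single, one_pow]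
  exact ⟨start_mem, traj_eq_last.trans (ite_val_eq_single (Fin.last k) 1).symm, reaches_unsafe,
    fun safe => safe x0 start_mem σ k reaches_unsafe⟩
end

section
/- Let σ_k = (σ0,…,σ_{k−1}) ∈ Σ^k and let A_σ = 2Â_σ be the constructed matrices in dimension n = k+1. For any l ≥ 1 and any finite sequence σ'_l = (σ'_0,…,σ'_{l−1}) ∈ Σ^l, the matrix product A_{σ'_{l−1}} ⋯ A_{σ'_0} is nonzero if and only if σ'_l is a contiguous factor of σ_k, i.e., there exists an index 0 ≤ j with j + l ≤ k such that σ'_i = σ_{j+i} for all 0 ≤ i ≤ l−1. -/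
open Matrix

/-- The matrix product `A_{s_{l-1}} ⋯ A_{s_0}` along a word `s ∈ Σ^l`. -/
noncomputable def prodA {k : ℕ} {A : Type} (w : Fin k → A) :
    (l : ℕ) → (Fin l → A) → Matrix (Fin (k + 1)) (Fin (k + 1)) ℝ
  | 0, _ => 1
  | l + 1, s => Amat w (s (Fin.last l)) * prodA w l (fun i => s i.castSucc)

/-!
Every `Â_σ` is a partial shift: row `0` vanishes, and row `i + 1` is the basis vector `e_i` if
`w i = σ` and zero otherwise. The product along `s` is therefore a scaled partial shift by `l`,
whose column `q` survives all `l` factors exactly when `s` is read in `w` from position `q`.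
-/

section Factor

variable {k l : ℕ} {A : Type*}

/-- `s` is the factor of `w` starting at position `j`: it fits into `w` there, and
`s i = w (j + i)` for all `i`. -/
def IsFactorAt (w : Fin k → A) (s : Fin l → A) (j : ℕ) : Prop :=
  ∃ h : j + l ≤ k, ∀ i : Fin l, s i = w ⟨j + i, by lia⟩

lemma isFactorAt_zero_iff {w : Fin k → A} {s : Fin 0 → A} {j : ℕ} : IsFactorAt w s j ↔ j ≤ k := by
  simp [IsFactorAt]

lemma isFactorAt_succ_iff {w : Fin k → A} {s : Fin (l + 1) → A} {j : ℕ} :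
    IsFactorAt w s j ↔
      IsFactorAt w (Fin.init s) j ∧ ∃ h : j + l < k, w ⟨j + l, h⟩ = s (Fin.last l) := by
  constructor
  · rintro ⟨hjl, hs⟩
    exact ⟨⟨by lia, fun i => hs i.castSucc⟩, by lia, (hs (Fin.last l)).symm⟩
  · rintro ⟨⟨_, hinit⟩, hjl, hlast⟩
    exact ⟨hjl, Fin.lastCases hlast.symm hinit⟩

end Factor

section ProductEntries

variable {k l : ℕ} {A : Type}

lemma Amat_zero_row (w : Fin k → A) (σ : A) : Amat w σ 0 = 0 := by
  ext j
  simp [Amat, Ahat]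

open scoped Classical in
lemma Amat_succ_row (w : Fin k → A) (σ : A) (i : Fin k) :
    Amat w σ i.succ = if w i = σ then Pi.single i.castSucc 2 else 0 := by
  ext j
  by_cases hij : j = i.castSucc
  · subst hij
    by_cases hσ : w i = σ <;> simp [Amat, Ahat, hσ]
  · have hne : (i : ℕ) ≠ j := fun h => hij (Fin.ext h.symm)
    by_cases hσ : w i = σ <;> simp [Amat, Ahat, hσ, hij, hne]

lemma Amat_mul_zero_apply {n : Type*} (w : Fin k → A) (σ : A) (M : Matrix (Fin (k + 1)) n ℝ)
    (q : n) : (Amat w σ * M) 0 q = 0 := by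
  rw [mul_apply_eq_vecMul, Amat_zero_row, zero_vecMul, Pi.zero_apply]

open scoped Classical in
lemma Amat_mul_succ_apply {n : Type*} (w : Fin k → A) (σ : A) (M : Matrix (Fin (k + 1)) n ℝ)
    (i : Fin k) (q : n) :
    (Amat w σ * M) i.succ q = if w i = σ then 2 * M i.castSucc q else 0 := by
  rw [mul_apply_eq_vecMul, Amat_succ_row]
  split_ifs <;> simp

open scoped Classical in
theorem prodA_apply (w : Fin k → A) (s : Fin l → A) (p q : Fin (k + 1)) :
    prodA w l s p q = if (p : ℕ) = q + l ∧ IsFactorAt w s q then 2 ^ l else 0 := by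
  induction l generalizing p with
  | zero => simp [prodA, one_apply, isFactorAt_zero_iff, Fin.ext_iff, q.is_le]
  | succ l ih =>
    change (Amat w (s (Fin.last l)) * prodA w l (Fin.init s)) p q = _
    cases p using Fin.cases with
    | zero => simp [Amat_mul_zero_apply]
    | succ i =>
      have factor_iff : (i.succ : ℕ) = q + (l + 1) ∧ IsFactorAt w s q ↔
          w i = s (Fin.last l) ∧ (i : ℕ) = q + l ∧ IsFactorAt w (Fin.init s) q := by
        rw [isFactorAt_succ_iff, Fin.val_succ, ← add_assoc, Nat.add_right_cancel_iff]
        constructor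
        · rintro ⟨hi, hinit, _, hlast⟩
          exact ⟨by simpa only [← hi] using hlast, hi, hinit⟩
        · rintro ⟨hlast, hi, hinit⟩
          exact ⟨hi, hinit, hi ▸ i.isLt, by simpa only [← hi] using hlast⟩
      simp only [Amat_mul_succ_apply, ih, Fin.val_castSucc, factor_iff, ite_and, pow_succ',
        mul_ite, mul_zero]

theorem prodA_apply_ne_zero_iff {w : Fin k → A} {s : Fin l → A} {p q : Fin (k + 1)} :
    prodA w l s p q ≠ 0 ↔ (p : ℕ) = q + l ∧ IsFactorAt w s q := by
  simp [prodA_apply]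

end ProductEntries

/-- for any `l ≥ 1` and any word `s ∈ Σ^l`, the product
`A_{s_{l-1}} ⋯ A_{s_0}` is nonzero iff `s` is a contiguous factor of `w`. -/
theorem prod_ne_zero_iff_factor {k : ℕ} {A : Type} (w : Fin k → A)
    (l : ℕ) (hl : 1 ≤ l) (s : Fin l → A) :
    prodA w l s ≠ 0 ↔
      ∃ j : ℕ, ∃ h : j + l ≤ k,
        ∀ i : Fin l, s i = w ⟨j + (i : ℕ), by have := i.isLt; omega⟩ := by
  change _ ↔ ∃ j, IsFactorAt w s j
  constructor
  · intro hprod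
    obtain ⟨p, q, hpq⟩ : ∃ p q, prodA w l s p q ≠ 0 := by
      contrapose! hprod
      exact Matrix.ext hprod
    exact ⟨q, (prodA_apply_ne_zero_iff.mp hpq).2⟩
  · rintro ⟨j, hj⟩ hprod
    have hjl : j + l ≤ k := hj.1
    have hentry : prodA w l s ⟨j + l, by lia⟩ ⟨j, by lia⟩ ≠ 0 :=
      prodA_apply_ne_zero_iff.mpr ⟨rfl, hj⟩
    exact hentry (by rw [hprod, Matrix.zero_apply])
end

section
/- Let G = (V, E) be a graph over Σ, let σ_k ∈ Σ^k, let A_σ = 2Â_σ be the constructed matrices in dimension n = k+1, let X0 = {x ∈ ℝ^n : Σ_{i=1}^n x[i]² ≤ 1/4^k} and Xu = {x ∈ ℝ^n : Σ_{i=1}^n x[i]² ≥ 1}, and for each v ∈ V let B_v(x) = Σ_{i=1}^n p_v[i] x[i]² − 1 with coefficients satisfying 1 < p_v[i] ≤ 4^k for all v ∈ V and 1 ≤ i ≤ n. Then: (a) B_v(x) ≤ 0 for all x ∈ X0 and all v ∈ V; (b) B_v(x) > 0 for all x ∈ Xu and all v ∈ V; and (c) the condition that B_{v'}(A_σ x)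 ≤ B_v(x) for all x ∈ ℝ^n and all (v, σ, v') ∈ E holds if and only if the componentwise vector inequality 4 Â_σ^⊤ p_{v'} ≤ p_v holds for all (v, σ, v') ∈ E. -/
open Matrix

/-!
Both barrier bounds compare `∑ᵢ p[i] x[i]²` with a constant multiple of `∑ᵢ x[i]²`. For the edge
condition, each row of `A_σ` has at most one nonzero entry, so no cross terms appear in
`(A_σ x)[i]²`: squaring acts entrywise, and `x ↦ B_{v'}(A_σ x)` is again a diagonal form, whose
weights are `(A_σ ⊙ A_σ)ᵀ p_{v'} = 4 Â_σᵀ p_{v'}`. Diagonal forms are compared on all of `ℝⁿ` by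
comparing their weights.
-/

section SumSquares

variable {ι R : Type*} [Fintype ι]

theorem sum_pow_of_subsingleton_support [Semiring R] {f : ι → R}
    (hf : (Function.support f).Subsingleton) {n : ℕ} (hn : n ≠ 0) :
    (∑ i, f i) ^ n = ∑ i, f i ^ n := by
  rcases hf.eq_empty_or_singleton with hempty | ⟨a, ha⟩
  · simp [Function.support_eq_empty_iff.mp hempty, hn]
  · have hzero : ∀ i ≠ a, f i = 0 := fun i hi =>
      Function.notMem_support.mp (by simpa [ha] using hi)
    rw [Fintype.sum_eq_single a hzero,
      Fintype.sum_eq_single a fun i hi => by rw [hzero i hi, zero_pow hn]]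

theorem mulVec_sq_of_subsingleton_support_row {κ : Type*} [CommSemiring R] {M : Matrix κ ι R}
    {i : κ} (hM : (Function.support (M i)).Subsingleton) (x : ι → R) :
    (M *ᵥ x) i ^ 2 = ((M ⊙ M) *ᵥ x ^ 2) i := by
  have hMx : (Function.support fun j => M i j * x j).Subsingleton :=
    hM.anti fun _ => left_ne_zero_of_mul
  simp only [mulVec, dotProduct, sum_pow_of_subsingleton_support hMx two_ne_zero, mul_pow,
    hadamard_apply, Pi.pow_apply, sq (M i _)]

theorem sum_mul_mulVec_sq {κ : Type*} [Fintype κ] [CommSemiring R] {M : Matrix κ ι R}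
    (hM : ∀ i, (Function.support (M i)).Subsingleton) (q : κ → R) (x : ι → R) :
    ∑ i, q i * (M *ᵥ x) i ^ 2 = ∑ j, ((M ⊙ M)ᵀ *ᵥ q) j * x j ^ 2 :=
  calc ∑ i, q i * (M *ᵥ x) i ^ 2
      = q ⬝ᵥ ((M ⊙ M) *ᵥ x ^ 2) :=
        Finset.sum_congr rfl fun i _ => by rw [mulVec_sq_of_subsingleton_support_row (hM i)]
    _ = ((M ⊙ M)ᵀ *ᵥ q) ⬝ᵥ x ^ 2 := by rw [dotProduct_mulVec, mulVec_transpose]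

section OrderedRing

variable [Ring R] [LinearOrder R] [IsStrictOrderedRing R] {p q x : ι → R} {c : R}

theorem sum_mul_sq_le_sum_mul_sq (h : p ≤ q) (x : ι → R) :
    ∑ i, p i * x i ^ 2 ≤ ∑ i, q i * x i ^ 2 :=
  Finset.sum_le_sum fun i _ => mul_le_mul_of_nonneg_right (h i) (sq_nonneg (x i))

theorem forall_sum_mul_sq_le_sum_mul_sq_iff :
    (∀ x : ι → R, ∑ i, p i * x i ^ 2 ≤ ∑ i, q i * x i ^ 2) ↔ p ≤ q := by
  classical
  refine ⟨fun h i => ?_, sum_mul_sq_le_sum_mul_sq⟩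
  simpa [Pi.single_apply] using h (Pi.single i 1)

theorem mul_sum_sq_lt_sum_mul_sq (hq : ∀ i, c < q i) (hx : x ≠ 0) :
    c * ∑ i, x i ^ 2 < ∑ i, q i * x i ^ 2 := by
  obtain ⟨i, hi⟩ := Function.ne_iff.mp hx
  rw [Finset.mul_sum]
  exact Finset.sum_lt_sum (fun j _ => mul_le_mul_of_nonneg_right (hq j).le (sq_nonneg (x j)))
    ⟨i, Finset.mem_univ i, mul_lt_mul_of_pos_right (hq i) (sq_pos_of_ne_zero hi)⟩

theorem one_lt_sum_mul_sq (hq : ∀ i, 1 < q i) (hx : 1 ≤ ∑ i, x i ^ 2) :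
    1 < ∑ i, q i * x i ^ 2 := by
  have hx_ne : x ≠ 0 := by
    rintro rfl
    exact not_le_of_gt one_pos (by simpa using hx)
  calc 1 ≤ 1 * ∑ i, x i ^ 2 := by rwa [one_mul]
    _ < ∑ i, q i * x i ^ 2 := mul_sum_sq_lt_sum_mul_sq hq hx_ne

end OrderedRing

theorem sum_mul_sq_le_one [Field R] [LinearOrder R] [IsStrictOrderedRing R] {q x : ι → R} {c : R}
    (hc : 0 < c) (hq : ∀ i, q i ≤ c) (hx : ∑ i, x i ^ 2 ≤ 1 / c) :
    ∑ i, q i * x i ^ 2 ≤ 1 :=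
  calc ∑ i, q i * x i ^ 2
      ≤ ∑ i, c * x i ^ 2 := sum_mul_sq_le_sum_mul_sq hq x
    _ = c * ∑ i, x i ^ 2 := (Finset.mul_sum ..).symm
    _ ≤ 1 := (le_div_iff₀' hc).mp hx

end SumSquares

section ShiftMatrices

variable {k : ℕ} {A : Type} (w : Fin k → A) (σ : A)

theorem Ahat_hadamard_self : Ahat w σ ⊙ Ahat w σ = Ahat w σ := by
  ext i j
  simp [Ahat]

theorem subsingleton_support_Ahat_row (i : Fin (k + 1)) :
    (Function.support (Ahat w σ i)).Subsingleton := by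
  have val_eq_succ {j : Fin (k + 1)} (hj : Ahat w σ i j ≠ 0) : (i : ℕ) = j + 1 := by
    obtain ⟨_, _, hij⟩ := of_not_not fun h => hj (if_neg h)
    exact hij
  intro j hj j' hj'
  exact Fin.ext (Nat.succ_injective ((val_eq_succ hj).symm.trans (val_eq_succ hj')))

theorem subsingleton_support_Amat_row (i : Fin (k + 1)) :
    (Function.support (Amat w σ i)).Subsingleton :=
  (subsingleton_support_Ahat_row w σ i).anti <|
    Function.support_const_smul_subset (2 : ℝ) (Ahat w σ i)

theorem Amat_hadamard_self : Amat w σ ⊙ Amat w σ = (4 : ℝ) • Ahat w σ := by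
  rw [Amat, smul_hadamard, hadamard_smul, Ahat_hadamard_self, smul_smul]
  norm_num

theorem transpose_Amat_hadamard_self_mulVec (q : Fin (k + 1) → ℝ) (i : Fin (k + 1)) :
    ((Amat w σ ⊙ Amat w σ)ᵀ *ᵥ q) i = 4 * ((Ahat w σ)ᵀ *ᵥ q) i := by
  rw [Amat_hadamard_self, transpose_smul, smul_mulVec, Pi.smul_apply, smul_eq_mul]

end ShiftMatrices

theorem barrier_conditions_iff_vector_ineq_general {ι R A V : Type*} [Fintype ι]
    [Field R] [LinearOrder R] [IsStrictOrderedRing R]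
    (E : Set (V × A × V)) {M : A → Matrix ι ι R}
    (hM : ∀ σ i, (Function.support (M σ i)).Subsingleton)
    {p : V → ι → R} {c : R} (hc : 0 < c) (hp : ∀ v i, 1 < p v i ∧ p v i ≤ c) :
    (∀ v, ∀ x : ι → R, ∑ i, x i ^ 2 ≤ 1 / c → (∑ i, p v i * x i ^ 2) - 1 ≤ 0) ∧
    (∀ v, ∀ x : ι → R, 1 ≤ ∑ i, x i ^ 2 → 0 < (∑ i, p v i * x i ^ 2) - 1) ∧
    ((∀ e ∈ E, ∀ x : ι → R,
        (∑ i, p e.2.2 i * (M e.2.1 *ᵥ x) i ^ 2) - 1 ≤ (∑ i, p e.1 i * x i ^ 2) - 1) ↔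
      ∀ e ∈ E, ∀ i, ((M e.2.1 ⊙ M e.2.1)ᵀ *ᵥ p e.2.2) i ≤ p e.1 i) := by
  refine ⟨fun v x hx => ?_, fun v x hx => ?_, forall₂_congr fun e _ => ?_⟩
  · exact sub_nonpos.mpr (sum_mul_sq_le_one hc (fun i => (hp v i).2) hx)
  · exact sub_pos.mpr (one_lt_sum_mul_sq (fun i => (hp v i).1) hx)
  · simp only [sub_le_sub_iff_right, sum_mul_mulVec_sq (hM e.2.1)]
    exact forall_sum_mul_sq_le_sum_mul_sq_iff

/-- with `B_v(x) = ∑ᵢ p_v[i] x[i]² − 1` and `1 < p_v[i] ≤ 4^k`: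
(a) `B_v ≤ 0` on `X0 = {x : ∑ x[i]² ≤ 1/4^k}`;
(b) `B_v > 0` on `Xu = {x : ∑ x[i]² ≥ 1}`;
(c) the edge decrease conditions `B_{v'}(A_σ x) ≤ B_v(x)` (for all `x` and all
edges) hold iff the componentwise inequalities `4 Â_σᵀ p_{v'} ≤ p_v` hold for
all edges. -/
theorem barrier_conditions_iff_vector_ineq {k : ℕ} {A V : Type} [Fintype V]
    (E : Set (V × A × V)) (w : Fin k → A)
    (p : V → Fin (k + 1) → ℝ)
    (hp : ∀ (v : V) (i : Fin (k + 1)), 1 < p v i ∧ p v i ≤ 4 ^ k) :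
    (∀ v : V, ∀ x : Fin (k + 1) → ℝ, (∑ i, x i ^ 2 ≤ 1 / 4 ^ k) →
        (∑ i, p v i * x i ^ 2) - 1 ≤ 0) ∧
    (∀ v : V, ∀ x : Fin (k + 1) → ℝ, (1 ≤ ∑ i, x i ^ 2) →
        0 < (∑ i, p v i * x i ^ 2) - 1) ∧
    ((∀ e ∈ E, ∀ x : Fin (k + 1) → ℝ,
        (∑ i, p e.2.2 i * (Amat w e.2.1 *ᵥ x) i ^ 2) - 1
          ≤ (∑ i, p e.1 i * x i ^ 2) - 1) ↔
      (∀ e ∈ E, ∀ i : Fin (k + 1),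
        4 * ((Ahat w e.2.1)ᵀ *ᵥ p e.2.2) i ≤ p e.1 i)) := by
  simpa only [transpose_Amat_hadamard_self_mulVec] using
    barrier_conditions_iff_vector_ineq_general E (subsingleton_support_Amat_row w)
      (by positivity) hp
end

section
/- Let G_np = (V_np, E_np) be a graph over Σ that fails to accept the finite sequence σ_k ∈ Σ^k, and let A_σ = 2Â_σ be the constructed matrices in dimension n = k+1. Define the auxiliary directed graph Ĝ_np with vertex set V_np × {1,…,n} and an edge from (v, i) to (v', i') if and only if (v, σ, v') ∈ E_np for some σ ∈ Σ and A_σ[i', i] ≠ 0. Then Ĝ_np is acyclic (contains no directed cycle) and every directed path in Ĝ_np has at most k−1 edges. -/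
open Matrix

/-- Edge relation of the auxiliary graph `Ĝ` on `V × {1,…,n}`: there is an edge
from `(v, i)` to `(v', i')` iff `(v, σ, v') ∈ E` for some `σ` and
`A_σ[i', i] ≠ 0`. -/
noncomputable def AuxRel {k : ℕ} {V A : Type} (E : Set (V × A × V))
    (w : Fin k → A) : (V × Fin (k + 1)) → (V × Fin (k + 1)) → Prop :=
  fun a b => ∃ σ : A, (a.1, σ, b.1) ∈ E ∧ Amat w σ b.2 a.2 ≠ 0

/-!
The only nonzero entries of the matrices `A_σ` are `A_{w t}[t + 1, t]`, so every edge of `Ĝ` raises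
the second coordinate, the level, by exactly one; this already rules out cycles. A path is therefore
at most `k` edges long, and one with `k` edges visits the levels `0, …, k` in order: its first
coordinates then read the whole word `w` in `(V, E)`.
-/

theorem apply_eq_apply_zero_add_val_of_succ {M : Type*} [AddMonoidWithOne M] {l : ℕ}
    {f : Fin (l + 1) → M} (hf : ∀ i : Fin l, f i.succ = f i.castSucc + 1) (i : Fin (l + 1)) :
    f i = f 0 + (i : ℕ) := by
  induction i using Fin.induction with
  | zero => simp
  | succ i ih => rw [hf, ih, Fin.val_castSucc, Fin.val_succ, Nat.cast_succ, add_assoc]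

section AuxPath

variable {k l : ℕ} {V A : Type} {E : Set (V × A × V)} {w : Fin k → A}
  {p : Fin (l + 1) → V × Fin (k + 1)}

theorem amat_apply_ne_zero_iff {σ : A} {i j : Fin (k + 1)} :
    Amat w σ i j ≠ 0 ↔ ∃ t : Fin k, w t = σ ∧ i = t.succ ∧ j = t.castSucc := by
  simp only [Amat, Ahat, Matrix.smul_apply, Matrix.of_apply, smul_eq_mul, ne_eq, mul_eq_zero,
    OfNat.ofNat_ne_zero, false_or, ite_eq_right_iff, one_ne_zero, imp_false, not_not]
  constructor
  · rintro ⟨hj, hw, hi⟩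
    exact ⟨⟨j, hj⟩, hw, Fin.ext hi, rfl⟩
  · rintro ⟨t, hw, rfl, rfl⟩
    exact ⟨t.isLt, hw, rfl⟩

theorem auxRel_iff {a b : V × Fin (k + 1)} :
    AuxRel E w a b ↔ ∃ t : Fin k, a.2 = t.castSucc ∧ b.2 = t.succ ∧ (a.1, w t, b.1) ∈ E := by
  simp only [AuxRel, amat_apply_ne_zero_iff]
  constructor
  · rintro ⟨_, hE, t, rfl, hb, ha⟩
    exact ⟨t, ha, hb, hE⟩
  · rintro ⟨t, ha, hb, hE⟩
    exact ⟨w t, hE, t, rfl, hb, ha⟩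

theorem AuxRel.level_eq_add_one {a b : V × Fin (k + 1)} (hab : AuxRel E w a b) :
    (b.2 : ℕ) = a.2 + 1 := by
  obtain ⟨t, ha, hb, -⟩ := auxRel_iff.1 hab
  rw [ha, hb, Fin.val_succ, Fin.val_castSucc]

theorem level_eq_add_of_auxRel_path
    (hp : ∀ i : Fin l, AuxRel E w (p i.castSucc) (p i.succ)) (i : Fin (l + 1)) :
    ((p i).2 : ℕ) = (p 0).2 + i :=
  apply_eq_apply_zero_add_val_of_succ (f := fun i => ((p i).2 : ℕ))
    (fun i => (hp i).level_eq_add_one) i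

theorem injective_of_auxRel_path
    (hp : ∀ i : Fin l, AuxRel E w (p i.castSucc) (p i.succ)) : Function.Injective p := by
  intro i j hij
  have hlevel : ((p 0).2 : ℕ) + i = (p 0).2 + j := by
    rw [← level_eq_add_of_auxRel_path hp, ← level_eq_add_of_auxRel_path hp, hij]
  exact Fin.ext (Nat.add_left_cancel hlevel)

theorem start_level_add_length_le_of_auxRel_path
    (hp : ∀ i : Fin l, AuxRel E w (p i.castSucc) (p i.succ)) : ((p 0).2 : ℕ) + l ≤ k := by
  have hlast := level_eq_add_of_auxRel_path hp (Fin.last l)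
  rw [Fin.val_last] at hlast
  exact hlast ▸ (p (Fin.last l)).2.is_le

theorem exists_mem_edges_of_auxRel_path
    (hp : ∀ i : Fin l, AuxRel E w (p i.castSucc) (p i.succ)) (i : Fin l) :
    ∃ t : Fin k, (t : ℕ) = (p 0).2 + i ∧ ((p i.castSucc).1, w t, (p i.succ).1) ∈ E := by
  obtain ⟨t, ht, -, hE⟩ := auxRel_iff.1 (hp i)
  have hlevel := level_eq_add_of_auxRel_path hp i.castSucc
  rw [ht, Fin.val_castSucc, Fin.val_castSucc] at hlevel
  exact ⟨t, hlevel, hE⟩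

theorem mem_edges_of_auxRel_path_of_length_eq {p : Fin (k + 1) → V × Fin (k + 1)}
    (hp : ∀ i : Fin k, AuxRel E w (p i.castSucc) (p i.succ)) (i : Fin k) :
    ((p i.castSucc).1, w i, (p i.succ).1) ∈ E := by
  have hstart : ((p 0).2 : ℕ) = 0 := by
    have := start_level_add_length_le_of_auxRel_path hp
    omega
  obtain ⟨t, ht, hE⟩ := exists_mem_edges_of_auxRel_path hp i
  obtain rfl : t = i := Fin.ext (by rw [ht, hstart, zero_add])
  exact hE

theorem length_lt_of_auxRel_path
    (hna : ¬ ∃ v : Fin (k + 1) → V, ∀ i : Fin k, (v i.castSucc, w i, v i.succ) ∈ E)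
    (hp : ∀ i : Fin l, AuxRel E w (p i.castSucc) (p i.succ)) : l < k := by
  refine lt_of_le_of_ne (le_of_add_le_right (start_level_add_length_le_of_auxRel_path hp)) ?_
  rintro rfl
  exact hna ⟨fun i => (p i).1, mem_edges_of_auxRel_path_of_length_eq hp⟩

end AuxPath

theorem aux_graph_acyclic_short_paths_general {k : ℕ} {V A : Type} (E : Set (V × A × V))
    (w : Fin k → A) :
    (∀ l : ℕ, 1 ≤ l → ∀ p : Fin (l + 1) → V × Fin (k + 1),
      (∀ i : Fin l, AuxRel E w (p i.castSucc) (p i.succ)) →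
      p 0 ≠ p (Fin.last l)) ∧
    ((¬ ∃ v : Fin (k + 1) → V, ∀ i : Fin k, (v i.castSucc, w i, v i.succ) ∈ E) →
      ∀ l : ℕ, ∀ p : Fin (l + 1) → V × Fin (k + 1),
        (∀ i : Fin l, AuxRel E w (p i.castSucc) (p i.succ)) → l < k) := by
  refine ⟨fun l hl p hp => ?_, fun hna l p hp => length_lt_of_auxRel_path hna hp⟩
  have hends : (0 : Fin (l + 1)) ≠ Fin.last l := Fin.ne_of_lt hl
  exact (injective_of_auxRel_path hp).ne hends

/-- if the graph `(V, E)` fails to accept the word `w ∈ Σ^k`,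
then the auxiliary graph `Ĝ` is acyclic and every directed path in `Ĝ` has
at most `k − 1` edges. -/
theorem aux_graph_acyclic_short_paths {k : ℕ} (hk : 1 ≤ k) {V A : Type}
    [Fintype V] (E : Set (V × A × V)) (w : Fin k → A)
    (hna : ¬ ∃ v : Fin (k + 1) → V, ∀ i : Fin k, (v i.castSucc, w i, v i.succ) ∈ E) :
    (∀ l : ℕ, 1 ≤ l → ∀ p : Fin (l + 1) → V × Fin (k + 1),
      (∀ i : Fin l, AuxRel E w (p i.castSucc) (p i.succ)) →
      p 0 ≠ p (Fin.last l)) ∧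
    (∀ l : ℕ, ∀ p : Fin (l + 1) → V × Fin (k + 1),
      (∀ i : Fin l, AuxRel E w (p i.castSucc) (p i.succ)) → l ≤ k - 1) := by
  obtain ⟨hacyclic, hshort⟩ := aux_graph_acyclic_short_paths_general E w
  exact ⟨hacyclic, fun l p hp => Nat.le_sub_one_of_lt (hshort hna l p hp)⟩
end

section
/- Let G_np = (V_np, E_np) be a graph over Σ that fails to accept the finite sequence σ_k ∈ Σ^k, and let Â_σ be the constructed binary matrices in dimension n = k+1. Then there exist vectors p_v ∈ ℝ^n, v ∈ V_np, with 4 ≤ p_v[i] ≤ 4^k for all v ∈ V_np and 1 ≤ i ≤ n, such that the componentwise vector inequality 4 Â_σ^⊤ p_{v'} ≤ p_v holds for every edge (v, σ, v') ∈ E_np. -/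
open Matrix

/-! Weight a vertex `v` at position `i` by `c ^ (ℓ + 1)`, where `ℓ` is the length of the longest
factor of `w` starting at position `i` that can be read along a path from `v`. Prepending an edge
`(v, w i, v')` lengthens such a path by one, so the weight grows by at least the factor `c` from
`(v', i + 1)` to `(v, i)`; and `ℓ < k`, since a path with `ℓ = k` would read all of `w`. -/

theorem Ahat_transpose_mulVec_castSucc {k : ℕ} {A : Type} [DecidableEq A] (w : Fin k → A) (σ : A)
    (x : Fin (k + 1) → ℝ) (i : Fin k) :
    ((Ahat w σ)ᵀ *ᵥ x) i.castSucc = if w i = σ then x i.succ else 0 := by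
  have column_eq (j : Fin (k + 1)) :
      Ahat w σ j i.castSucc = if j = i.succ then if w i = σ then 1 else 0 else 0 := by
    simp [Ahat, Fin.ext_iff, and_comm, ite_and]
  simp [mulVec, dotProduct, column_eq]

theorem Ahat_transpose_mulVec_last {k : ℕ} {A : Type} (w : Fin k → A) (σ : A)
    (x : Fin (k + 1) → ℝ) : ((Ahat w σ)ᵀ *ᵥ x) (Fin.last k) = 0 := by
  simp [mulVec, dotProduct, Ahat]

theorem mul_Ahat_transpose_mulVec_le {k : ℕ} {A : Type} {w : Fin k → A} {σ : A} {c : ℝ}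
    {x y : Fin (k + 1) → ℝ} (hy : ∀ i, 0 ≤ y i)
    (hxy : ∀ i : Fin k, w i = σ → c * x i.succ ≤ y i.castSucc) (i : Fin (k + 1)) :
    c * ((Ahat w σ)ᵀ *ᵥ x) i ≤ y i := by
  classical
  cases i using Fin.lastCases with
  | last => simpa [Ahat_transpose_mulVec_last] using hy (Fin.last k)
  | cast i =>
    rw [Ahat_transpose_mulVec_castSucc]
    split_ifs with hσ
    · exact hxy i hσ
    · simpa using hy i.castSucc

section Paths

variable {k : ℕ} {V A : Type*} {E : Set (V × A × V)} {w : Fin k → A}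

/-- The graph with edge set `E` accepts the word `w`: some path is labelled by `w`. -/
def Accepts (E : Set (V × A × V)) (w : Fin k → A) : Prop :=
  ∃ u : Fin (k + 1) → V, ∀ l : Fin k, (u l.castSucc, w l, u l.succ) ∈ E

/-- Some path of length `m` starting at `v` is labelled by the factor `w i, …, w (i + m - 1)` of
`w`. The path is indexed by positions in `w`, so that it visits `u i, …, u (i + m)`; the other
values of `u` are irrelevant. -/
def ReadsFrom (E : Set (V × A × V)) (w : Fin k → A) (v : V) (i : Fin (k + 1)) (m : ℕ) : Prop :=
  i + m ≤ k ∧ ∃ u : Fin (k + 1) → V, u i = v ∧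
    ∀ l : Fin k, (i : ℕ) ≤ l → (l : ℕ) < i + m → (u l.castSucc, w l, u l.succ) ∈ E

theorem ReadsFrom.zero (v : V) (i : Fin (k + 1)) : ReadsFrom E w v i 0 :=
  ⟨i.is_le, fun _ => v, rfl, fun _ hil hli => absurd hli hil.not_gt⟩

theorem ReadsFrom.cons {v v' : V} {i : Fin k} {m : ℕ} (he : (v, w i, v') ∈ E)
    (h : ReadsFrom E w v' i.succ m) : ReadsFrom E w v i.castSucc (m + 1) := by
  obtain ⟨hm, u, rfl, hu⟩ := h
  simp only [Fin.val_succ] at hm hu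
  refine ⟨by simp only [Fin.val_castSucc]; omega, Function.update u i.castSucc v, by simp,
    fun l hil hlm => ?_⟩
  simp only [Fin.val_castSucc] at hil hlm
  have succ_ne : l.succ ≠ i.castSucc := by
    simp only [ne_eq, Fin.ext_iff, Fin.val_succ, Fin.val_castSucc]
    omega
  rw [Function.update_of_ne succ_ne]
  obtain rfl | hne := eq_or_ne l i
  · simpa using he
  · rw [Function.update_of_ne (by simpa using hne)]
    exact hu l (by omega) (by omega)

theorem ReadsFrom.accepts {v : V} {i : Fin (k + 1)} (h : ReadsFrom E w v i k) : Accepts E w := by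
  obtain ⟨hi, u, -, hu⟩ := h
  exact ⟨u, fun l => hu l (by omega) (by omega)⟩

open scoped Classical in
/-- The greatest length of a factor of `w` starting at position `i` that can be read along a path
from `v`. -/
noncomputable def longestRead (E : Set (V × A × V)) (w : Fin k → A) (v : V) (i : Fin (k + 1)) : ℕ :=
  Nat.findGreatest (ReadsFrom E w v i) k

theorem readsFrom_longestRead (v : V) (i : Fin (k + 1)) :
    ReadsFrom E w v i (longestRead E w v i) := by
  classical
  exact Nat.findGreatest_spec (Nat.zero_le k) (ReadsFrom.zero v i)

theorem ReadsFrom.le_longestRead {v : V} {i : Fin (k + 1)} {m : ℕ} (h : ReadsFrom E w v i m) :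
    m ≤ longestRead E w v i := by
  classical
  exact Nat.le_findGreatest (le_of_add_le_right h.1) h

theorem longestRead_lt_of_not_accepts (hw : ¬ Accepts E w) (v : V) (i : Fin (k + 1)) :
    longestRead E w v i < k := by
  have reads := readsFrom_longestRead (E := E) (w := w) v i
  refine (le_of_add_le_right reads.1).lt_of_ne fun heq => hw ?_
  rw [heq] at reads
  exact reads.accepts

theorem longestRead_succ_lt_castSucc {v v' : V} {i : Fin k} (he : (v, w i, v') ∈ E) :
    longestRead E w v' i.succ < longestRead E w v i.castSucc :=
  ((readsFrom_longestRead v' i.succ).cons he).le_longestRead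

end Paths

theorem exists_admissible_coefficients_general {k : ℕ} {V : Type*} {A : Type} {c : ℝ} (hc : 1 ≤ c)
    (E : Set (V × A × V)) (w : Fin k → A) (hw : ¬ Accepts E w) :
    ∃ p : V → Fin (k + 1) → ℝ,
      (∀ (v : V) (i : Fin (k + 1)), c ≤ p v i ∧ p v i ≤ c ^ k) ∧
      (∀ e ∈ E, ∀ i : Fin (k + 1), c * ((Ahat w e.2.1)ᵀ *ᵥ p e.2.2) i ≤ p e.1 i) := by
  refine ⟨fun v i => c ^ (longestRead E w v i + 1), fun v i => ⟨?_, ?_⟩, ?_⟩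
  · exact le_self_pow₀ hc (Nat.succ_ne_zero _)
  · exact pow_le_pow_right₀ hc (longestRead_lt_of_not_accepts hw v i)
  · rintro ⟨v, σ, v'⟩ he
    refine mul_Ahat_transpose_mulVec_le (fun i => by positivity) ?_
    rintro i rfl
    rw [← pow_succ']
    exact pow_le_pow_right₀ hc (Nat.succ_le_succ (longestRead_succ_lt_castSucc he))

/-- if the graph `(V, E)` fails to accept the word `w ∈ Σ^k`,
then there exist vectors `p_v ∈ ℝ^{k+1}` with `4 ≤ p_v[i] ≤ 4^k` such that
the componentwise inequality `4 Â_σᵀ p_{v'} ≤ p_v` holds for every edge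
`(v, σ, v') ∈ E`. -/
theorem exists_admissible_coefficients {k : ℕ} (hk : 1 ≤ k) {V A : Type}
    [Fintype V] (E : Set (V × A × V)) (w : Fin k → A)
    (hna : ¬ ∃ v : Fin (k + 1) → V, ∀ i : Fin k, (v i.castSucc, w i, v i.succ) ∈ E) :
    ∃ p : V → Fin (k + 1) → ℝ,
      (∀ (v : V) (i : Fin (k + 1)), 4 ≤ p v i ∧ p v i ≤ 4 ^ k) ∧
      (∀ e ∈ E, ∀ i : Fin (k + 1),
        4 * ((Ahat w e.2.1)ᵀ *ᵥ p e.2.2) i ≤ p e.1 i) :=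
  exists_admissible_coefficients_general (by norm_num) E w hna
end

section
/- For any graph G = (V, E) over a finite alphabet Σ, there exist a dimension n, a discrete-time switched system S over Σ on X = ℝ^n with linear modes f_σ(x) = A_σ x, sets X0, Xu ⊆ ℝ^n, and functions B_v : ℝ^n → ℝ, v ∈ V, such that: (i) B_v(x) ≤ 0 for all x ∈ X0 and v ∈ V; (ii) B_v(x) > 0 for all x ∈ Xu and v ∈ V; (iii) for every (v, σ, v') ∈ E, B_{v'}(f_σ(x)) ≤ B_v(x) for all x ∈ ℝ^n; and (iv) for every triple (v, σ, v') ∈ (V × Σ × V) \ E, there exists x ∈ ℝ^n with B_{v'}(f_σ(x)) > B_v(x). -/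
open Matrix

/-!
Fix initial states at every vertex and let a state move along the edges of the graph. The states
reachable at a vertex `v` form the zero set of a barrier `B v` which is `1` elsewhere, and the
decrease condition along edges is then automatic. For it to fail at a non-edge `(v, a, w)`, an
initial state of `v` must be sent by the mode `a` to a state that is not reachable at `w`. So the
image of an initial state should remember both its vertex and the mode, and longer runs should not
interfere: encoding vertices by distinct nonzero reals `c v` and letters by distinct reals `θ a`,
start at `(c v, 0, 0)` and use the nilpotent modes `(s, _, _) ↦ (0, s, θ a * s)`. The origin, a
fixed point of every mode, is added to the initial states so that it is reachable at all vertices.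
-/

section ReachableAt

variable {V A X : Type*}

/-- Reachability for a switched system constrained by a labelled graph: `ReachableAt E f I v x`
says that some path of `E` ending at `v` drives an initial state, taken in `I u` at the first
vertex `u` of the path, to `x`. -/
inductive ReachableAt (E : Set (V × A × V)) (f : A → X → X) (I : V → Set X) : V → X → Prop
  | start {v : V} {x : X} (hx : x ∈ I v) : ReachableAt E f I v x
  | step {v w : V} {a : A} {x : X} (hE : (v, a, w) ∈ E) (hx : ReachableAt E f I v x) :
      ReachableAt E f I w (f a x)

open Classical in
/-- The multiple barrier function attached to reachability: at the vertex `v`, the indicator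
function of the states that are not reachable at `v`. -/
noncomputable def reachBarrier (E : Set (V × A × V)) (f : A → X → X) (I : V → Set X)
    (v : V) (x : X) : ℝ :=
  if ReachableAt E f I v x then 0 else 1

variable {E : Set (V × A × V)} {f : A → X → X} {I : V → Set X} {v w : V} {a : A} {x : X}

theorem reachBarrier_of_reachableAt (h : ReachableAt E f I v x) : reachBarrier E f I v x = 0 :=
  if_pos h

theorem reachBarrier_of_not_reachableAt (h : ¬ReachableAt E f I v x) :
    reachBarrier E f I v x = 1 :=
  if_neg h

theorem reachBarrier_le_one : reachBarrier E f I v x ≤ 1 := by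
  unfold reachBarrier
  split_ifs <;> norm_num

theorem reachBarrier_map_le (hE : (v, a, w) ∈ E) (x : X) :
    reachBarrier E f I w (f a x) ≤ reachBarrier E f I v x := by
  by_cases hx : ReachableAt E f I v x
  · rw [reachBarrier_of_reachableAt hx, reachBarrier_of_reachableAt (hx.step hE)]
  · rw [reachBarrier_of_not_reachableAt hx]
    exact reachBarrier_le_one

theorem reachBarrier_lt_map (hx : x ∈ I v) (hfx : ¬ReachableAt E f I w (f a x)) :
    reachBarrier E f I v x < reachBarrier E f I w (f a x) := by
  rw [reachBarrier_of_reachableAt (.start hx), reachBarrier_of_not_reachableAt hfx]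
  exact one_pos

end ReachableAt

section TagMatrix

variable {V A R : Type*} [Semiring R]

/-- The matrix of the linear mode `(s, _, _) ↦ (0, s, t * s)`, which moves the first coordinate
away and tags it with `t`. -/
def tagMatrix (t : R) : Matrix (Fin 3) (Fin 3) R :=
  !![0, 0, 0; 1, 0, 0; t, 0, 0]

theorem tagMatrix_mulVec (t : R) (x : Fin 3 → R) : tagMatrix t *ᵥ x = ![0, x 0, t * x 0] := by
  ext i
  fin_cases i <;> simp [tagMatrix, Matrix.mulVec, dotProduct, Fin.sum_univ_three]

/-- Reachability for the switched system with modes `tagMatrix (θ a)`, started at a vertex `v`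
from the origin or from the code `(c v, 0, 0)` of `v`. -/
abbrev TagReachableAt (E : Set (V × A × V)) (θ : A → R) (c : V → R) : V → (Fin 3 → R) → Prop :=
  ReachableAt E (fun a x ↦ tagMatrix (θ a) *ᵥ x) (fun v ↦ {0, ![c v, 0, 0]})

variable {E : Set (V × A × V)} {θ : A → R} {c : V → R} {v w : V} {a : A}

theorem TagReachableAt.apply_zero {x : Fin 3 → R} (h : TagReachableAt E θ c v x) (hx : x 0 ≠ 0) :
    x 0 = c v := by
  cases h with
  | start h =>
    obtain rfl | rfl := h
    · exact absurd rfl hx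
    · rfl
  | step => simp [tagMatrix_mulVec] at hx

theorem TagReachableAt.mem_edges [IsRightCancelMulZero R] (hθ : θ.Injective) (hc : c.Injective)
    (hcv : c v ≠ 0) (h : TagReachableAt E θ c w (tagMatrix (θ a) *ᵥ ![c v, 0, 0])) :
    (v, a, w) ∈ E := by
  generalize hy : tagMatrix (θ a) *ᵥ ![c v, 0, 0] = y at h
  have hy' : y = ![0, c v, θ a * c v] := by rw [← hy, tagMatrix_mulVec]; rfl
  cases h with
  | start h =>
    have hy1 : y 1 = 0 := by obtain rfl | rfl := h <;> rfl
    exact absurd (by simpa [hy'] using hy1) hcv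
  | @step u _ b x hE hx =>
    obtain ⟨hx0, htag⟩ : x 0 = c v ∧ θ b * x 0 = θ a * c v := by
      simpa [tagMatrix_mulVec] using hy'
    have hba : b = a := hθ (mul_right_cancel₀ hcv (hx0 ▸ htag))
    have huv : u = v := hc ((TagReachableAt.apply_zero hx (hx0 ▸ hcv)).symm.trans hx0)
    rwa [← hba, ← huv]

end TagMatrix

open Cardinal in
theorem nonempty_embedding_real_of_mk_le_continuum {α : Type*} (h : #α ≤ 𝔠) :
    Nonempty (α ↪ ℝ) := by
  rw [← Cardinal.lift_mk_le', Cardinal.mk_real]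
  simpa using h

open Cardinal in
theorem exists_separating_barrier_general {V A : Type*} (hV : #V ≤ 𝔠) (hA : #A ≤ 𝔠)
    (E : Set (V × A × V)) :
    ∃ (M : A → Matrix (Fin 3) (Fin 3) ℝ)
      (X0 Xu : Set (Fin 3 → ℝ)) (B : V → (Fin 3 → ℝ) → ℝ),
      X0.Nonempty ∧ Xu.Nonempty ∧
      (∀ v : V, ∀ x ∈ X0, B v x ≤ 0) ∧
      (∀ v : V, ∀ x ∈ Xu, 0 < B v x) ∧
      (∀ e ∈ E, ∀ x : Fin 3 → ℝ, B e.2.2 (M e.2.1 *ᵥ x) ≤ B e.1 x) ∧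
      (∀ e : V × A × V, e ∉ E →
        ∃ x : Fin 3 → ℝ, B e.1 x < B e.2.2 (M e.2.1 *ᵥ x)) := by
  obtain ⟨ι⟩ := nonempty_embedding_real_of_mk_le_continuum hV
  obtain ⟨θ⟩ := nonempty_embedding_real_of_mk_le_continuum hA
  let c : V → ℝ := fun v ↦ Real.exp (ι v)
  have hc : c.Injective := Real.exp_injective.comp ι.injective
  have hpos (v : V) : 0 < c v := Real.exp_pos _
  have hzero (v : V) : TagReachableAt E θ c v 0 := .start (Or.inl rfl)
  have hneg (v : V) : ¬TagReachableAt E θ c v ![-1, 0, 0] := fun h ↦ by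
    have : -1 = c v := h.apply_zero (by simp)
    linarith [hpos v]
  refine ⟨fun a ↦ tagMatrix (θ a), {0}, {![-1, 0, 0]},
    reachBarrier E (fun a x ↦ tagMatrix (θ a) *ᵥ x) (fun v ↦ {0, ![c v, 0, 0]}),
    Set.singleton_nonempty _, Set.singleton_nonempty _, ?nonpos, ?pos, ?edge, ?nonedge⟩
  case nonpos =>
    rintro v _ rfl
    exact (reachBarrier_of_reachableAt (hzero v)).le
  case pos =>
    rintro v _ rfl
    exact one_pos.trans_eq (reachBarrier_of_not_reachableAt (hneg v)).symm
  case edge => exact fun e he x ↦ reachBarrier_map_le he x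
  case nonedge =>
    exact fun e he ↦ ⟨![c e.1, 0, 0], reachBarrier_lt_map (Or.inr rfl)
      fun h ↦ he (TagReachableAt.mem_edges θ.injective hc (hpos e.1).ne' h)⟩

/-- key lemma for the ordering result: for any graph `(V, E)`
over a finite alphabet, there exist a dimension `n`, a switched linear system
with modes `f_σ(x) = A_σ x` on `ℝⁿ`, sets `X0, Xu ⊆ ℝⁿ`, and functions
`B_v : ℝⁿ → ℝ` such that (i) `B_v ≤ 0` on `X0`; (ii) `B_v > 0` on `Xu`;
(iii) the decrease condition holds along every edge of `E`; and (iv) the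
decrease condition fails for every triple `(v, σ, v') ∉ E`. -/
theorem exists_separating_barrier {V A : Type} [Fintype V] [Fintype A]
    (E : Set (V × A × V)) :
    ∃ (n : ℕ) (M : A → Matrix (Fin n) (Fin n) ℝ)
      (X0 Xu : Set (Fin n → ℝ)) (B : V → (Fin n → ℝ) → ℝ),
      (∀ v : V, ∀ x ∈ X0, B v x ≤ 0) ∧
      (∀ v : V, ∀ x ∈ Xu, 0 < B v x) ∧
      (∀ e ∈ E, ∀ x : Fin n → ℝ, B e.2.2 (M e.2.1 *ᵥ x) ≤ B e.1 x) ∧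
      (∀ e : V × A × V, e ∉ E →
        ∃ x : Fin n → ℝ, B e.1 x < B e.2.2 (M e.2.1 *ᵥ x)) := by
  obtain ⟨M, X0, Xu, B, -, -, hB⟩ := exists_separating_barrier_general
    (Cardinal.mk_le_aleph0.trans Cardinal.aleph0_le_continuum)
    (Cardinal.mk_le_aleph0.trans Cardinal.aleph0_le_continuum) E
  exact ⟨3, M, X0, Xu, B, hB⟩
end

section
/- Let G = (V, E) and Ḡ = (V̄, Ē) be path-complete graphs over the same finite alphabet Σ. If G ⪯ Ḡ (in the ordering of path-complete barrier functions), then G simulates Ḡ, i.e., there exists a function R : V̄ → V such that (v̄, σ, v̄') ∈ Ē implies (R(v̄), σ, R(v̄')) ∈ E. -/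
/-- A graph `(V, E)` over the alphabet `A` is path-complete if every finite
word of every length `k ≥ 1` is accepted by the graph. -/
def PathComplete {V A : Type} (E : Set (V × A × V)) : Prop :=
  ∀ k : ℕ, 1 ≤ k → ∀ w : Fin k → A,
    ∃ v : Fin (k + 1) → V, ∀ i : Fin k, (v i.castSucc, w i, v i.succ) ∈ E

/-- `{B_v}` is a graph-based barrier function for the switched system with
modes `f σ` on `ℝⁿ` and the sets `X0`, `Xu`, on the graph `(V, E)`. -/
def GraphBarrier {V A : Type} {n : ℕ} (E : Set (V × A × V))
    (f : A → (Fin n → ℝ) → (Fin n → ℝ)) (X0 Xu : Set (Fin n → ℝ))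
    (B : V → (Fin n → ℝ) → ℝ) : Prop :=
  (∀ v : V, ∀ x ∈ X0, B v x ≤ 0) ∧
  (∀ v : V, ∀ x ∈ Xu, 0 < B v x) ∧
  (∀ e ∈ E, ∀ x : Fin n → ℝ, B e.2.2 (f e.2.1 x) ≤ B e.1 x)

/-- The ordering `G ⪯ Ḡ` of path-complete graphs: for every dimension `n`,
every switched system over the alphabet on `ℝⁿ`, every pair of sets
`X0, Xu ⊆ ℝⁿ` and every template `T`, the existence of a barrier function on
`G` within `T` implies the existence of one on `Ḡ` within `T`. -/
def PCOrder {V V' A : Type} (E : Set (V × A × V)) (E' : Set (V' × A × V')) : Prop :=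
  ∀ (n : ℕ) (f : A → (Fin n → ℝ) → (Fin n → ℝ))
    (X0 Xu : Set (Fin n → ℝ)) (T : Set ((Fin n → ℝ) → ℝ)),
    (∃ B : V → (Fin n → ℝ) → ℝ, (∀ v : V, B v ∈ T) ∧ GraphBarrier E f X0 Xu B) →
    (∃ B' : V' → (Fin n → ℝ) → ℝ, (∀ v' : V', B' v' ∈ T) ∧ GraphBarrier E' f X0 Xu B')

/-!
Read `G` as a nondeterministic automaton and run its subset construction: a state is a set `K` of
vertices, and the letter `σ` sends `K` to its set of `σ`-successors. Give the vertex `v` the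
function which is `0` on the sets containing `v` and `1` on the others. These functions do not
increase along the edges of `G`, and more generally, for `R : V' → V`, the functions of the vertices
`R v'` do not increase along the edges of `G'` exactly when `R` is a simulation. As `V` is
countable, it has at most continuum many subsets, so this system can be coded into `ℝ`. With the
functions above as template, a barrier function on `G'` amounts to a choice of `R`, so `G ⪯ G'`
supplies a simulation.
-/

open Function
open scoped Cardinal

section Nonincreasing

variable {V A S X : Type*}

/-- The edge condition of a graph-based barrier function, for a switched system on an arbitrary
state space `S`. -/
def NonincreasingAlong (E : Set (V × A × V)) (F : A → S → S) (B : V → S → ℝ) : Prop :=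
  ∀ e ∈ E, ∀ s, B e.2.2 (F e.2.1 s) ≤ B e.1 s

theorem graphBarrier_empty_iff {V A : Type} {n : ℕ} {E : Set (V × A × V)}
    {f : A → (Fin n → ℝ) → (Fin n → ℝ)} {B : V → (Fin n → ℝ) → ℝ} :
    GraphBarrier E f ∅ ∅ B ↔ NonincreasingAlong E f B := by
  simp only [GraphBarrier, NonincreasingAlong, Set.mem_empty_iff_false, false_imp_iff,
    implies_true, true_and]

theorem nonincreasingAlong_comp_iff {E : Set (V × A × V)} {F : A → S → S} {B : V → S → ℝ}
    {g : X → S} {i : S → X} (hgi : LeftInverse g i) :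
    NonincreasingAlong E (fun σ x => i (F σ (g x))) (fun v x => B v (g x)) ↔
      NonincreasingAlong E F B := by
  simp only [NonincreasingAlong, hgi _, hgi.surjective.forall]

theorem PCOrder.exists_nonincreasingAlong {V V' A : Type} {E : Set (V × A × V)}
    {E' : Set (V' × A × V')} (hord : PCOrder E E') {n : ℕ} {g : (Fin n → ℝ) → S}
    (hg : Surjective g) {F : A → S → S} {B : V → S → ℝ} (hB : NonincreasingAlong E F B) :
    ∃ R : V' → V, NonincreasingAlong E' F (fun v' => B (R v')) := by
  obtain ⟨i, hgi⟩ := hg.hasRightInverse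
  obtain ⟨B', hB'mem, hB'⟩ := hord n (fun σ x => i (F σ (g x))) ∅ ∅
    (Set.range fun v x => B v (g x))
    ⟨fun v x => B v (g x), Set.mem_range_self,
      graphBarrier_empty_iff.2 ((nonincreasingAlong_comp_iff hgi).2 hB)⟩
  choose R hR using hB'mem
  obtain rfl : (fun v' x => B (R v') (g x)) = B' := funext hR
  exact ⟨R, (nonincreasingAlong_comp_iff hgi).1 (graphBarrier_empty_iff.1 hB')⟩

end Nonincreasing

section SubsetConstruction

variable {V V' A : Type*}

/-- The transition map of the subset construction: the targets of the `σ`-labelled edges that start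
in `K`. -/
def successors (E : Set (V × A × V)) (σ : A) (K : Set V) : Set V :=
  {v' | ∃ v ∈ K, (v, σ, v') ∈ E}

/-- The function attached to the vertex `v` in the subset construction: the indicator of the sets
of vertices that avoid `v`. -/
noncomputable def avoidance (v : V) : Set V → ℝ :=
  {K | v ∉ K}.indicator 1

theorem avoidance_le_avoidance_iff {v w : V} {K L : Set V} :
    avoidance w L ≤ avoidance v K ↔ (v ∈ K → w ∈ L) := by
  by_cases hv : v ∈ K <;> by_cases hw : w ∈ L <;> simp [avoidance, hv, hw]

theorem forall_successors_iff {E : Set (V × A × V)} {σ : A} {v w : V} :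
    (∀ K, v ∈ K → w ∈ successors E σ K) ↔ (v, σ, w) ∈ E := by
  refine ⟨fun h => ?_, fun h K hv => ⟨v, hv, h⟩⟩
  obtain ⟨_, rfl, hE⟩ := h {v} rfl
  exact hE

theorem nonincreasingAlong_avoidance_iff {E : Set (V × A × V)} {E' : Set (V' × A × V')}
    {R : V' → V} :
    NonincreasingAlong E' (successors E) (fun v' => avoidance (R v')) ↔
      ∀ e ∈ E', (R e.1, e.2.1, R e.2.2) ∈ E := by
  simp only [NonincreasingAlong, avoidance_le_avoidance_iff, forall_successors_iff]

end SubsetConstruction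

theorem exists_surjective_set_of_countable (V : Type*) [Countable V] :
    ∃ g : (Fin 1 → ℝ) → Set V, Surjective g := by
  have hcard : #(Set V) ≤ 𝔠 := by
    rw [Cardinal.mk_set, ← Cardinal.two_power_aleph0]
    exact Cardinal.power_le_power_left two_ne_zero Cardinal.mk_le_aleph0
  obtain ⟨ι⟩ : Nonempty (Set V ↪ ℝ) := by
    rwa [← Cardinal.lift_mk_le', Cardinal.mk_real, Cardinal.lift_continuum,
      Cardinal.lift_le_continuum]
  exact ⟨invFun ι ∘ Equiv.funUnique (Fin 1) ℝ,
    (invFun_surjective ι.injective).comp (Equiv.surjective _)⟩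

theorem order_implies_simulation_general {V V' A : Type} [Countable V]
    {E : Set (V × A × V)} {E' : Set (V' × A × V')} (hord : PCOrder E E') :
    ∃ R : V' → V, ∀ e ∈ E', (R e.1, e.2.1, R e.2.2) ∈ E := by
  obtain ⟨g, hg⟩ := exists_surjective_set_of_countable V
  have hE : NonincreasingAlong E (successors E) avoidance :=
    nonincreasingAlong_avoidance_iff (R := id).2 fun _ he => he
  obtain ⟨R, hR⟩ := hord.exists_nonincreasingAlong hg hE
  exact ⟨R, nonincreasingAlong_avoidance_iff.1 hR⟩

/-- if `G` and `Ḡ` are path-complete graphs over the same finite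
alphabet and `G ⪯ Ḡ` in the ordering of path-complete barrier functions, then
`G` simulates `Ḡ`, i.e. there is `R : V̄ → V` with
`(v̄, σ, v̄') ∈ Ē → (R v̄, σ, R v̄') ∈ E`. -/
theorem order_implies_simulation {V V' A : Type}
    [Fintype V] [Fintype V'] [Fintype A]
    (E : Set (V × A × V)) (E' : Set (V' × A × V'))
    (hG : PathComplete E) (hG' : PathComplete E')
    (hord : PCOrder E E') :
    ∃ R : V' → V, ∀ e ∈ E', (R e.1, e.2.1, R e.2.2) ∈ E :=
  order_implies_simulation_general hord
end
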